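/- arXiv:2106.03803 — 2 statements merged into one kernel-verified Lean document; each statement's English description precedes it below -/
import Mathlib

section
/- Let 0 → M_0 → M →(p) M_1 → 0 be an admissible exact sequence in A. (1) If the ring homomorphism End(M) → End(M_1) is split surjective, End(M_1) is a semi-simple ℚ-algebra, and Hom(M, M_0') = 0 for every object M_0' of A_0, then the sequence is right saturated. (2) Dually, if End(M) → End(M_0) is split surjective, End(M_0) is a semi-simple ℚ-algebra, and Hom(M_1', M) = 0 for every object M_1' of A_1, then the sequence is left saturated. -/
set_option maxHeartbeats 1000000
set_option synthInstance.maxHeartbeats 400000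

open CategoryTheory CategoryTheory.Limits ZeroObject

universe v u

attribute [local instance] CategoryTheory.Abelian.hasFiniteBiproducts

variable {A : Type u} [Category.{v} A] [Abelian A] [CategoryTheory.Linear ℚ A]

/-- An Abelian subcategory of `A`: a class of objects containing `0` and closed under
subobjects, quotients and finite direct sums (so that the corresponding full subcategory
is Abelian and the inclusion is exact). -/
structure AbelianSubcat (A : Type u) [Category.{v} A] [Abelian A]
    [CategoryTheory.Linear ℚ A] where
  P : A → Prop
  zero_mem : P 0
  mem_of_mono : ∀ {X Y : A} (f : X ⟶ Y), Mono f → P Y → P X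
  mem_of_epi : ∀ {X Y : A} (f : X ⟶ Y), Epi f → P X → P Y
  mem_biprod : ∀ {X Y : A}, P X → P Y → P (X ⊞ Y)

/-- The two subcategories are orthogonal: `Hom(A_0, A_1) = Hom(A_1, A_0) = 0`. -/
def OrthogonalPair (A0 A1 : AbelianSubcat A) : Prop :=
  (∀ {X Y : A}, A0.P X → A1.P Y → ∀ f : X ⟶ Y, f = 0) ∧
  (∀ {X Y : A}, A1.P X → A0.P Y → ∀ f : X ⟶ Y, f = 0)

/-- An admissible exact sequence `0 → M_0 → M → M_1 → 0` with `M_0 ∈ A_0`, `M_1 ∈ A_1`. -/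
structure AdmissibleSeq (A0 A1 : AbelianSubcat A) (M0 M M1 : A)
    (i : M0 ⟶ M) (p : M ⟶ M1) : Prop where
  zero : i ≫ p = 0
  shortExact : (ShortComplex.mk i p zero).ShortExact
  mem0 : A0.P M0
  mem1 : A1.P M1

/-- The image `p(N)` of a subobject `N ⊆ X` under a morphism `p : X ⟶ Y`. -/
noncomputable def subImg {X Y : A} (p : X ⟶ Y) (N : Subobject X) : Subobject Y :=
  imageSubobject (N.arrow ≫ p)

/-- `N` is the universal lift of the subobject `N₁ ⊆ M_1` along `p : M ↠ M_1`:
`p(N) = N₁`, and every subobject of `M` whose image under `p` is `N₁` contains `N`. -/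
def IsUnivLift {X Y : A} (p : X ⟶ Y) (N1 : Subobject Y) (N : Subobject X) : Prop :=
  subImg p N = N1 ∧ ∀ N' : Subobject X, subImg p N' = N1 → N ≤ N'

/-- `N` is the universal extension of the subobject `N₀ ⊆ M₀sub` (`M₀sub ⊆ M` a given
subobject): `N ∩ M₀sub = N₀`, and every subobject of `M` whose intersection with
`M₀sub` is `N₀` is contained in `N`. -/
def IsUnivExt {X : A} (M0sub : Subobject X) (N0 : Subobject X) (N : Subobject X) : Prop :=
  N ⊓ M0sub = N0 ∧ ∀ N' : Subobject X, N' ⊓ M0sub = N0 → N' ≤ N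

/-- The `m`-th power `M^m` of an object (`M^0 = 0`). -/
noncomputable abbrev pow (M : A) (m : ℕ) : A := ⨁ (fun _ : Fin m => M)

/-- The `n`-th power `f^n : X^n ⟶ Y^n` of a morphism. -/
noncomputable abbrev powMap {X Y : A} (f : X ⟶ Y) (n : ℕ) : pow X n ⟶ pow Y n :=
  biproduct.map (fun _ => f)

/-- The admissible exact sequence `0 → M_0 →i M →p M_1 → 0` is *right saturated* if every
`φ₁ : M_1^n ⟶ M_1^m` has a lift `φ : M^n ⟶ M^m` such that `ker(φ)` is the universal lift
of `ker(φ₁)` along `p^n`. -/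
def RightSaturated {M0 M M1 : A} (i : M0 ⟶ M) (p : M ⟶ M1) : Prop :=
  ∀ (n m : ℕ) (φ1 : pow M1 n ⟶ pow M1 m),
    ∃ φ : pow M n ⟶ pow M m,
      φ ≫ powMap p m = powMap p n ≫ φ1 ∧
      IsUnivLift (powMap p n) (kernelSubobject φ1) (kernelSubobject φ)

/-- The admissible exact sequence `0 → M_0 →i M →p M_1 → 0` is *left saturated* if every
`φ₀ : M_0^n ⟶ M_0^m` has an extension `φ : M^n ⟶ M^m` such that `im(φ)` is the universal
extension of `im(φ₀)` inside `M^m` (relative to the subobject `M_0^m ⊆ M^m`). -/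
def LeftSaturated {M0 M M1 : A} (i : M0 ⟶ M) (p : M ⟶ M1) : Prop :=
  ∀ (n m : ℕ) (φ0 : pow M0 n ⟶ pow M0 m),
    ∃ φ : pow M n ⟶ pow M m,
      powMap i n ≫ φ = φ0 ≫ powMap i m ∧
      IsUnivExt (imageSubobject (powMap i m)) (imageSubobject (φ0 ≫ powMap i m))
        (imageSubobject φ)

/-!
By semisimplicity a matrix over `End M₁` has a quasi-inverse: `φ₁ ≫ ψ₁ ≫ φ₁ = φ₁` for some `ψ₁`.
The ring section carries this identity to lifts `φ`, `ψ`, so the kernel of `φ` is the image of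
`e = 1 - φ ≫ ψ`, just as the kernel of `φ₁` is the image of `e₁ = 1 - φ₁ ≫ ψ₁`, and `e` lifts `e₁`.
If `N'` is any subobject with image `ker φ₁`, then `e` followed by `Mⁿ ⟶ Mⁿ / N'` lands in
`(N' + M₀ⁿ) / N'`, a quotient of `M₀ⁿ` to which `M` has no nonzero morphism; so `im e ≤ N'`.
Left saturation is the dual argument, with the image of `φ` written as the kernel of `1 - ψ ≫ φ`.
-/

section Subobject

variable {C : Type u} [Category.{v} C]

lemma imageSubobject_le_iff_factors {X Y : C} (N : Subobject Y) (f : X ⟶ Y) [HasImage f] :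
    imageSubobject f ≤ N ↔ N.Factors f := by
  refine ⟨fun h => Subobject.factors_of_le f h ?_, fun h =>
    imageSubobject_le f (N.factorThru f h) (N.factorThru_arrow f h)⟩
  simpa only [Category.id_comp] using imageSubobject_factors_comp_self f (𝟙 X)

lemma imageSubobject_epi_comp [Balanced C] [HasImages C] [HasEqualizers C] {X Y Z : C}
    (p : X ⟶ Y) [Epi p] (f : Y ⟶ Z) : imageSubobject (p ≫ f) = imageSubobject f :=
  have : IsIso (Subobject.ofLE _ _ (imageSubobject_comp_le p f)) := isIso_of_mono_of_epi _
  Subobject.eq_of_comm (asIso (Subobject.ofLE _ _ (imageSubobject_comp_le p f)))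
    (Subobject.ofLE_arrow _)

lemma le_kernelSubobject_iff [HasZeroMorphisms C] {X Y : C} (N : Subobject X) (f : X ⟶ Y)
    [HasKernel f] : N ≤ kernelSubobject f ↔ N.arrow ≫ f = 0 := by
  rw [← kernelSubobject_factors_iff]
  exact ⟨fun h => Subobject.factors_of_le _ h N.factors_self, Subobject.le_of_factors⟩

lemma imageSubobject_le_kernelSubobject_iff [HasZeroMorphisms C] {X Y Z : C} (f : X ⟶ Y)
    (g : Y ⟶ Z) [HasImage f] [HasKernel g] :
    imageSubobject f ≤ kernelSubobject g ↔ f ≫ g = 0 := by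
  rw [imageSubobject_le_iff_factors, kernelSubobject_factors_iff]

section Preadditive

variable [Preadditive C] {X Y : C} {f : X ⟶ Y} {g : Y ⟶ X}

lemma kernelSubobject_eq_imageSubobject_of_comp_comp_eq_self [HasKernel f]
    [HasImage (𝟙 X - f ≫ g)] (h : f ≫ g ≫ f = f) :
    kernelSubobject f = imageSubobject (𝟙 X - f ≫ g) := by
  apply le_antisymm
  · have harrow : (kernelSubobject f).arrow ≫ (𝟙 X - f ≫ g) = (kernelSubobject f).arrow := by
      simp [Preadditive.comp_sub]
    apply Subobject.le_of_factors
    rw [← harrow]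
    exact imageSubobject_factors_comp_self _ _
  · simp [imageSubobject_le_kernelSubobject_iff, Preadditive.sub_comp, h]

lemma imageSubobject_eq_kernelSubobject_of_comp_comp_eq_self [HasImage f]
    [HasKernel (𝟙 Y - g ≫ f)] (h : f ≫ g ≫ f = f) :
    imageSubobject f = kernelSubobject (𝟙 Y - g ≫ f) := by
  apply le_antisymm
  · simp [imageSubobject_le_kernelSubobject_iff, Preadditive.comp_sub, h]
  · have harrow : (kernelSubobject (𝟙 Y - g ≫ f)).arrow =
        (kernelSubobject (𝟙 Y - g ≫ f)).arrow ≫ g ≫ f := by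
      simpa [Preadditive.comp_sub, sub_eq_zero] using kernelSubobject_arrow_comp (𝟙 Y - g ≫ f)
    apply Subobject.le_of_factors
    rw [harrow, ← Category.assoc]
    exact imageSubobject_factors_comp_self _ _

end Preadditive

variable [Abelian C]

lemma factors_iff_comp_cokernel_π_eq_zero {X Z : C} (N : Subobject X) (f : Z ⟶ X) :
    N.Factors f ↔ f ≫ cokernel.π N.arrow = 0 := by
  refine ⟨fun h => ?_, fun h => ?_⟩
  · rw [← N.factorThru_arrow f h, Category.assoc, cokernel.condition, comp_zero]
  · rw [← Abelian.monoLift_comp N.arrow f h]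
    exact Subobject.factors_comp_arrow _

lemma subImg_imageSubobject {X Y Z : C} (f : X ⟶ Y) (p : Y ⟶ Z) :
    subImg p (imageSubobject f) = imageSubobject (f ≫ p) := by
  rw [subImg, ← imageSubobject_epi_comp (factorThruImageSubobject f),
    imageSubobject_arrow_comp_assoc]

end Subobject

section HomVanishing

variable {C : Type u} [Category.{v} C] [Abelian C]

/-- Every morphism from `Z` to a quotient object of `K` is zero. This is what remains of
`Hom(Z, A_0) = 0` when only one object `K` of `A_0` is given. -/
def HomVanishesOnQuotients (Z K : C) : Prop :=
  ∀ ⦃Q : C⦄ (q : K ⟶ Q) [Epi q] (f : Z ⟶ Q), f = 0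

/-- Every morphism from a subobject of `K` to `Z` is zero. This is what remains of
`Hom(A_1, Z) = 0` when only one object `K` of `A_1` is given. -/
def HomVanishesOnSubobjects (K Z : C) : Prop :=
  ∀ ⦃Q : C⦄ (j : Q ⟶ K) [Mono j] (f : Q ⟶ Z), f = 0

namespace HomVanishesOnQuotients

variable {Z K : C}

lemma eq_zero_of_comp_cokernel_π (h : HomVanishesOnQuotients Z K) {W : C} (g : K ⟶ W)
    (f : Z ⟶ W) (hf : f ≫ cokernel.π g = 0) : f = 0 := by
  rw [← kernel.lift_ι (cokernel.π g) f hf, h (Abelian.factorThruImage g) (kernel.lift _ f hf),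
    zero_comp]

lemma pow_left (h : HomVanishesOnQuotients Z K) (n : ℕ) : HomVanishesOnQuotients (pow Z n) K :=
  fun _ q _ _ => biproduct.hom_ext' _ _ fun _ => (h q _).trans comp_zero.symm

lemma pow_right (h : HomVanishesOnQuotients Z K) (n : ℕ) : HomVanishesOnQuotients Z (pow K n) := by
  induction n with
  | zero =>
    intro Q q _ f
    have hq : q = 0 := biproduct.hom_ext' _ _ fun j => j.elim0
    exact (IsZero.of_epi_eq_zero q hq).eq_of_tgt _ _
  | succ n ih =>
    intro Q q _ f
    -- `Q` is an extension of `cokernel r`, a quotient of `K`, by a quotient of `K^n`.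
    let r : pow K n ⟶ Q :=
      biproduct.desc (fun j : Fin n => biproduct.ι (fun _ : Fin (n + 1) => K) j.castSucc ≫ q)
    let l : K ⟶ cokernel r :=
      biproduct.ι (fun _ : Fin (n + 1) => K) (Fin.last n) ≫ q ≫ cokernel.π r
    have hl : Epi l := by
      refine Preadditive.epi_of_cancel_zero _ fun a ha => ?_
      rw [← cancel_epi (q ≫ cokernel.π r), comp_zero]
      refine biproduct.hom_ext' _ _ (Fin.lastCases ?_ fun j => ?_)
      · simpa [l] using ha
      · have hr : biproduct.ι (fun _ : Fin (n + 1) => K) j.castSucc ≫ q =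
            biproduct.ι (fun _ : Fin n => K) j ≫ r := by simp [r]
        simp [reassoc_of% hr]
    exact ih.eq_zero_of_comp_cokernel_π r f (h l _)

lemma imageSubobject_le_of_imageSubobject_comp_le {S : ShortComplex C} (hS : S.Exact) [Epi S.g]
    (h : HomVanishesOnQuotients Z S.X₁) {N : Subobject S.X₂} {e : Z ⟶ S.X₂}
    (he : imageSubobject (e ≫ S.g) ≤ subImg S.g N) : imageSubobject e ≤ N := by
  rw [imageSubobject_le_iff_factors, factors_iff_comp_cokernel_π_eq_zero]
  set q := cokernel.π N.arrow
  obtain ⟨d, hd⟩ : ∃ d, S.g ≫ d = q ≫ cokernel.π (S.f ≫ q) :=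
    ⟨hS.desc _ (by simp [← Category.assoc]), hS.g_desc _ _⟩
  have hN : subImg S.g N ≤ kernelSubobject d := by
    rw [subImg, imageSubobject_le_kernelSubobject_iff, Category.assoc, hd]
    simp [q]
  refine h.eq_zero_of_comp_cokernel_π (S.f ≫ q) _ ?_
  rw [Category.assoc, ← hd, ← Category.assoc, ← imageSubobject_le_kernelSubobject_iff]
  exact he.trans hN

end HomVanishesOnQuotients

namespace HomVanishesOnSubobjects

variable {K Z : C}

lemma eq_zero_of_kernel_ι_comp (h : HomVanishesOnSubobjects K Z) {W : C} (g : W ⟶ K)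
    (f : W ⟶ Z) (hf : kernel.ι g ≫ f = 0) : f = 0 := by
  rw [← cokernel.π_desc (kernel.ι g) f hf,
    h (Abelian.factorThruCoimage g) (cokernel.desc _ f hf), comp_zero]

lemma pow_right (h : HomVanishesOnSubobjects K Z) (n : ℕ) : HomVanishesOnSubobjects K (pow Z n) :=
  fun _ j _ _ => biproduct.hom_ext _ _ fun _ => (h j _).trans zero_comp.symm

lemma pow_left (h : HomVanishesOnSubobjects K Z) (n : ℕ) :
    HomVanishesOnSubobjects (pow K n) Z := by
  induction n with
  | zero =>
    intro Q q _ f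
    have hq : q = 0 := biproduct.hom_ext _ _ fun j => j.elim0
    exact (IsZero.of_mono_eq_zero q hq).eq_of_src _ _
  | succ n ih =>
    intro Q q _ f
    let r : Q ⟶ pow K n :=
      biproduct.lift (fun j : Fin n => q ≫ biproduct.π (fun _ : Fin (n + 1) => K) j.castSucc)
    let l : kernel r ⟶ K :=
      kernel.ι r ≫ q ≫ biproduct.π (fun _ : Fin (n + 1) => K) (Fin.last n)
    have hl : Mono l := by
      refine Preadditive.mono_of_cancel_zero _ fun a ha => ?_
      rw [← cancel_mono (kernel.ι r ≫ q), zero_comp]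
      refine biproduct.hom_ext _ _ (Fin.lastCases ?_ fun j => ?_)
      · simpa [l] using ha
      · have hr : q ≫ biproduct.π (fun _ : Fin (n + 1) => K) j.castSucc =
            r ≫ biproduct.π (fun _ : Fin n => K) j := by simp [r]
        simp [hr]
    exact ih.eq_zero_of_kernel_ι_comp r f (h l _)

lemma le_kernelSubobject_of_inf_le {S : ShortComplex C} (hS : S.Exact) [Mono S.f]
    (h : HomVanishesOnSubobjects S.X₃ Z) {N : Subobject S.X₂} {e : S.X₂ ⟶ Z}
    (he : N ⊓ imageSubobject S.f ≤ kernelSubobject e) : N ≤ kernelSubobject e := by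
  rw [le_kernelSubobject_iff]
  set k := kernel.ι (N.arrow ≫ S.g)
  obtain ⟨d, hd⟩ : ∃ d, d ≫ S.f = k ≫ N.arrow := ⟨hS.lift _ (by simp [k]), hS.lift_f _ _⟩
  have hk : (N ⊓ imageSubobject S.f).Factors (k ≫ N.arrow) := by
    refine (Subobject.inf_factors _).2 ⟨Subobject.factors_comp_arrow _, ?_⟩
    rw [← hd]
    exact imageSubobject_factors_comp_self _ _
  refine h.eq_zero_of_kernel_ι_comp (N.arrow ≫ S.g) _ ?_
  rw [← Category.assoc, ← kernelSubobject_factors_iff]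
  exact Subobject.factors_of_le _ he hk

end HomVanishesOnSubobjects

end HomVanishing

section Universal

variable {C : Type u} [Category.{v} C] [Abelian C]

lemma isUnivLift_kernelSubobject {S : ShortComplex C} (hS : S.Exact) [Epi S.g]
    (hvan : HomVanishesOnQuotients S.X₂ S.X₁) {X Y : C} {p : X ⟶ Y} {φ : S.X₂ ⟶ X}
    {ψ : X ⟶ S.X₂} {φ₁ : S.X₃ ⟶ Y} {ψ₁ : Y ⟶ S.X₃} (hφ : φ ≫ p = S.g ≫ φ₁)
    (hψ : ψ ≫ S.g = p ≫ ψ₁) (hreg : φ ≫ ψ ≫ φ = φ) :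
    IsUnivLift S.g (kernelSubobject φ₁) (kernelSubobject φ) := by
  have hreg₁ : φ₁ ≫ ψ₁ ≫ φ₁ = φ₁ := by
    rw [← cancel_epi S.g, ← reassoc_of% hφ, ← reassoc_of% hψ, ← hφ, reassoc_of% hreg]
  have he : (𝟙 _ - φ ≫ ψ) ≫ S.g = S.g ≫ (𝟙 _ - φ₁ ≫ ψ₁) := by
    simp [Preadditive.sub_comp, Preadditive.comp_sub, hψ, reassoc_of% hφ]
  have himage : subImg S.g (kernelSubobject φ) = kernelSubobject φ₁ := by
    rw [kernelSubobject_eq_imageSubobject_of_comp_comp_eq_self hreg, subImg_imageSubobject, he,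
      imageSubobject_epi_comp, kernelSubobject_eq_imageSubobject_of_comp_comp_eq_self hreg₁]
  refine ⟨himage, fun N' hN' => ?_⟩
  rw [kernelSubobject_eq_imageSubobject_of_comp_comp_eq_self hreg] at himage ⊢
  apply hvan.imageSubobject_le_of_imageSubobject_comp_le hS
  rw [← subImg_imageSubobject, himage, hN']

lemma isUnivExt_imageSubobject {S : ShortComplex C} (hS : S.Exact) [Mono S.f]
    (hvan : HomVanishesOnSubobjects S.X₃ S.X₂) {X Y : C} {i : Y ⟶ X} {φ : X ⟶ S.X₂}
    {ψ : S.X₂ ⟶ X} {φ₀ : Y ⟶ S.X₁} {ψ₀ : S.X₁ ⟶ Y} (hφ : i ≫ φ = φ₀ ≫ S.f)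
    (hψ : S.f ≫ ψ = ψ₀ ≫ i) (hreg : φ ≫ ψ ≫ φ = φ) :
    IsUnivExt (imageSubobject S.f) (imageSubobject (φ₀ ≫ S.f)) (imageSubobject φ) := by
  have hker := imageSubobject_eq_kernelSubobject_of_comp_comp_eq_self hreg
  have hle : imageSubobject (φ₀ ≫ S.f) ≤ imageSubobject φ := hφ ▸ imageSubobject_comp_le i φ
  refine ⟨le_antisymm ?_ (le_inf hle (imageSubobject_comp_le φ₀ S.f)), fun N' hN' => ?_⟩
  · set a := (imageSubobject φ ⊓ imageSubobject S.f).arrow with ha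
    obtain ⟨b, hb⟩ : ∃ b, b ≫ S.f = a := by
      have hfac : (imageSubobject S.f).Factors a := Subobject.inf_arrow_factors_right _ _
      exact (Subobject.mk_factors_iff _ _).1 (imageSubobject_mono S.f ▸ hfac)
    have hfix : a = a ≫ ψ ≫ φ := by
      have hzero := (le_kernelSubobject_iff _ _).1 (inf_le_left.trans hker.le :
        imageSubobject φ ⊓ imageSubobject S.f ≤ _)
      rwa [Preadditive.comp_sub, Category.comp_id, sub_eq_zero] at hzero
    apply Subobject.le_of_factors
    rw [← ha, hfix, ← hb, Category.assoc, reassoc_of% hψ, hφ, ← Category.assoc]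
    exact imageSubobject_factors_comp_self _ _
  · rw [hker] at hle ⊢
    exact hvan.le_kernelSubobject_of_inf_le hS (hN'.trans_le hle)

end Universal

section Powers

variable {C : Type u} [Category.{v} C] [Abelian C]

lemma shortExact_powMap {S : ShortComplex C} (hS : S.ShortExact) (n : ℕ) :
    (ShortComplex.mk (powMap S.f n) (powMap S.g n) (by ext; simp)).ShortExact := by
  have := hS.mono_f
  have := hS.epi_g
  have hcomp {W : C} {k : W ⟶ pow S.X₂ n} (hk : k ≫ powMap S.g n = 0) (j : Fin n) :
      (k ≫ biproduct.π (fun _ : Fin n => S.X₂) j) ≫ S.g = 0 := by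
    simpa using hk =≫ biproduct.π (fun _ : Fin n => S.X₃) j
  have hlimit : IsLimit (KernelFork.ofι (f := powMap S.g n) (powMap S.f n) (by ext; simp)) :=
    KernelFork.IsLimit.ofι' _ _ fun k hk =>
      ⟨biproduct.lift fun j => hS.exact.lift _ (hcomp hk j), by ext; simp [hS.exact.lift_f]⟩
  have hmono : Mono (powMap S.f n) := inferInstance
  have hepi : Epi (powMap S.g n) := inferInstance
  exact .mk' (ShortComplex.exact_of_f_is_kernel _ hlimit) hmono hepi

lemma components_comp {J K L : Type} [Finite J] [Fintype K] [Finite L] {X : J → C} {Y : K → C}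
    {Z : L → C} (f : ⨁ X ⟶ ⨁ Y) (g : ⨁ Y ⟶ ⨁ Z) (j : J) (l : L) :
    biproduct.components (f ≫ g) j l =
      ∑ k, biproduct.components f j k ≫ biproduct.components g k l := by
  simp only [biproduct.components, Category.assoc]
  conv_lhs => rw [← Category.id_comp g, ← biproduct.total]
  simp only [Preadditive.comp_sum, Preadditive.sum_comp, Category.assoc]

/-- The morphism `Y^n ⟶ Y^m` obtained by applying `s : End X → End Y` to the entries of a
morphism `X^n ⟶ X^m`, regarded as a matrix over `End X`. -/
noncomputable def mapEntries {X Y : C} (s : End X → End Y) {n m : ℕ} (f : pow X n ⟶ pow X m) :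
    pow Y n ⟶ pow Y m :=
  biproduct.matrix fun j k => s (biproduct.components f j k)

lemma mapEntries_comp {X Y : C} {F : Type*} [FunLike F (End X) (End Y)]
    [NonUnitalRingHomClass F (End X) (End Y)] (s : F) {l m n : ℕ} (f : pow X l ⟶ pow X m)
    (g : pow X m ⟶ pow X n) : mapEntries s (f ≫ g) = mapEntries s f ≫ mapEntries s g := by
  let fEntry (j : Fin l) (a : Fin m) : End X := biproduct.components f j a
  let gEntry (a : Fin m) (k : Fin n) : End X := biproduct.components g a k
  have hentry (j : Fin l) (k : Fin n) :
      (s (biproduct.components (f ≫ g) j k) : Y ⟶ Y) = ∑ a, s (fEntry j a) ≫ s (gEntry a k) :=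
    calc s (biproduct.components (f ≫ g) j k)
        = s (∑ a, gEntry a k * fEntry j a) := congrArg s (components_comp f g j k)
      _ = ∑ a, s (gEntry a k) * s (fEntry j a) := by simp only [map_sum, map_mul]
  rw [← biproduct.components_matrix (mapEntries s f ≫ mapEntries s g), mapEntries]
  congr 1
  funext j k
  rw [hentry, components_comp]
  simp only [mapEntries, biproduct.matrix_components, fEntry, gEntry]

lemma mapEntries_comp_powMap {X Y : C} {s : End X → End Y} {p : Y ⟶ X}
    (hs : ∀ a : End X, (s a : Y ⟶ Y) ≫ p = p ≫ (a : X ⟶ X)) {n m : ℕ} (f : pow X n ⟶ pow X m) :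
    mapEntries s f ≫ powMap p m = powMap p n ≫ f := by
  conv_rhs => rw [← biproduct.components_matrix f]
  rw [mapEntries, biproduct.matrix_map, biproduct.map_matrix]
  simp only [hs]

lemma powMap_comp_mapEntries {X Y : C} {s : End X → End Y} {i : X ⟶ Y}
    (hs : ∀ a : End X, i ≫ (s a : Y ⟶ Y) = (a : X ⟶ X) ≫ i) {n m : ℕ} (f : pow X n ⟶ pow X m) :
    powMap i n ≫ mapEntries s f = f ≫ powMap i m := by
  conv_rhs => rw [← biproduct.components_matrix f]
  rw [mapEntries, biproduct.matrix_map, biproduct.map_matrix]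
  simp only [hs]

end Powers

section Semisimple

lemma exists_linearMap_comp_comp_eq_self {R V W : Type*} [Ring R] [AddCommGroup V] [Module R V]
    [AddCommGroup W] [Module R W] [IsSemisimpleModule R V] [IsSemisimpleModule R W]
    (f : V →ₗ[R] W) : ∃ g : W →ₗ[R] V, f ∘ₗ g ∘ₗ f = f := by
  obtain ⟨h, hh⟩ := IsSemisimpleModule.lifting_property f.rangeRestrict
    f.surjective_rangeRestrict LinearMap.id
  obtain ⟨g, hg⟩ := IsSemisimpleModule.extension_property (LinearMap.range f).subtype
    Subtype.val_injective h
  refine ⟨g, LinearMap.ext fun x => ?_⟩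
  calc f (g (f x)) = f (h (f.rangeRestrict x)) :=
        congrArg f (LinearMap.congr_fun hg (f.rangeRestrict x))
    _ = f x := congrArg Subtype.val (LinearMap.congr_fun hh (f.rangeRestrict x))

variable {C : Type u} [Category.{v} C] [Abelian C]

lemma exists_forall_linearMap_eq_comp {X Y : C} {n : ℕ} (G : (pow X n ⟶ X) →ₗ[End X] (Y ⟶ X)) :
    ∃ g : Y ⟶ pow X n, ∀ h : pow X n ⟶ X, G h = g ≫ h := by
  refine ⟨biproduct.lift fun j => G (biproduct.π _ j), fun h => ?_⟩
  let c (j : Fin n) : End X := biproduct.ι (fun _ : Fin n => X) j ≫ h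
  have hh : h = ∑ j, c j • biproduct.π (fun _ : Fin n => X) j := by
    conv_lhs => rw [← Category.id_comp h, ← biproduct.total, Preadditive.sum_comp]
    simp only [Category.assoc, c, End.smul_right]
  calc G h = ∑ j, c j • G (biproduct.π (fun _ : Fin n => X) j) := by
        conv_lhs => rw [hh]
        simp only [map_sum, map_smul]
    _ = biproduct.lift (fun j => G (biproduct.π _ j)) ≫ h := by
        rw [biproduct.lift_eq, Preadditive.sum_comp]
        simp only [Category.assoc, c, End.smul_right]

lemma exists_pow_comp_comp_eq_self {X : C} [IsSemisimpleRing (End X)] {n m : ℕ}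
    (f : pow X n ⟶ pow X m) : ∃ g : pow X m ⟶ pow X n, f ≫ g ≫ f = f := by
  let F : (pow X m ⟶ X) →ₗ[End X] (pow X n ⟶ X) := ((preadditiveYonedaObj X).map f.op).hom
  obtain ⟨G, hG⟩ := exists_linearMap_comp_comp_eq_self F
  obtain ⟨g, hg⟩ := exists_forall_linearMap_eq_comp G
  refine ⟨g, biproduct.hom_ext _ _ fun k => ?_⟩
  have hk : f ≫ G (f ≫ biproduct.π (fun _ : Fin m => X) k) = f ≫ biproduct.π _ k :=
    LinearMap.congr_fun hG (biproduct.π _ k)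
  simpa [hg] using hk

end Semisimple

section Saturation

variable {C : Type u} [Category.{v} C] [Abelian C] {S : ShortComplex C}

lemma rightSaturated_of_semisimple (hS : S.ShortExact) (s : End S.X₃ →+* End S.X₂)
    (hs : ∀ a : End S.X₃, (s a : S.X₂ ⟶ S.X₂) ≫ S.g = S.g ≫ (a : S.X₃ ⟶ S.X₃))
    [IsSemisimpleRing (End S.X₃)] (hvan : HomVanishesOnQuotients S.X₂ S.X₁) :
    RightSaturated S.f S.g := by
  intro n m φ₁
  obtain ⟨ψ₁, hreg⟩ := exists_pow_comp_comp_eq_self φ₁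
  have hSn := shortExact_powMap hS n
  have := hSn.epi_g
  refine ⟨mapEntries s φ₁, mapEntries_comp_powMap hs φ₁,
    isUnivLift_kernelSubobject hSn.exact ((hvan.pow_left n).pow_right n)
      (mapEntries_comp_powMap hs φ₁) (mapEntries_comp_powMap hs ψ₁) ?_⟩
  rw [← mapEntries_comp, ← mapEntries_comp, hreg]

lemma leftSaturated_of_semisimple (hS : S.ShortExact) (s : End S.X₁ →+* End S.X₂)
    (hs : ∀ a : End S.X₁, S.f ≫ (s a : S.X₂ ⟶ S.X₂) = (a : S.X₁ ⟶ S.X₁) ≫ S.f)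
    [IsSemisimpleRing (End S.X₁)] (hvan : HomVanishesOnSubobjects S.X₃ S.X₂) :
    LeftSaturated S.f S.g := by
  intro n m φ₀
  obtain ⟨ψ₀, hreg⟩ := exists_pow_comp_comp_eq_self φ₀
  have hSm := shortExact_powMap hS m
  have := hSm.mono_f
  refine ⟨mapEntries s φ₀, powMap_comp_mapEntries hs φ₀,
    isUnivExt_imageSubobject hSm.exact ((hvan.pow_left m).pow_right m)
      (powMap_comp_mapEntries hs φ₀) (powMap_comp_mapEntries hs ψ₀) ?_⟩
  rw [← mapEntries_comp, ← mapEntries_comp, hreg]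

theorem saturated_of_semisimple_general (hS : S.ShortExact) :
    (∀ s : End S.X₃ →+* End S.X₂,
        (∀ a : End S.X₃, (s a : S.X₂ ⟶ S.X₂) ≫ S.g = S.g ≫ (a : S.X₃ ⟶ S.X₃)) →
        IsSemisimpleRing (End S.X₃) → HomVanishesOnQuotients S.X₂ S.X₁ →
        RightSaturated S.f S.g) ∧
      ∀ s : End S.X₁ →+* End S.X₂,
        (∀ a : End S.X₁, S.f ≫ (s a : S.X₂ ⟶ S.X₂) = (a : S.X₁ ⟶ S.X₁) ≫ S.f) →
        IsSemisimpleRing (End S.X₁) → HomVanishesOnSubobjects S.X₃ S.X₂ →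
        LeftSaturated S.f S.g :=
  ⟨fun s hs _ hvan => rightSaturated_of_semisimple hS s hs hvan,
    fun s hs _ hvan => leftSaturated_of_semisimple hS s hs hvan⟩

end Saturation

/-- **Lemma (`LEMMASATSS`).** Let `0 → M_0 →i M →p M_1 → 0` be an admissible exact
sequence.
1. If the induced ring homomorphism `End(M) → End(M_1)` is split surjective (i.e. admits
a ring homomorphism section), `End(M_1)` is a semi-simple `ℚ`-algebra, and
`Hom(M, A_0) = 0`, then the sequence is right saturated.
2. Dually, if the induced ring homomorphism `End(M) → End(M_0)` is split surjective,
`End(M_0)` is a semi-simple `ℚ`-algebra and `Hom(A_1, M) = 0`, then the sequence is left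
saturated. -/
theorem saturated_of_semisimple (A0 A1 : AbelianSubcat A) (horth : OrthogonalPair A0 A1)
    (M0 M M1 : A) (i : M0 ⟶ M) (p : M ⟶ M1) (hadm : AdmissibleSeq A0 A1 M0 M M1 i p) :
    ((∀ (r : CategoryTheory.End M →+* CategoryTheory.End M1)
        (_ : ∀ e : CategoryTheory.End M, (e : M ⟶ M) ≫ p = p ≫ (r e : M1 ⟶ M1))
        (s : CategoryTheory.End M1 →+* CategoryTheory.End M),
        r.comp s = RingHom.id _ → IsSemisimpleRing (CategoryTheory.End M1) →
        (∀ X : A, A0.P X → ∀ f : M ⟶ X, f = 0) →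
        RightSaturated i p) ∧
     (∀ (r : CategoryTheory.End M →+* CategoryTheory.End M0)
        (_ : ∀ e : CategoryTheory.End M, i ≫ (e : M ⟶ M) = (r e : M0 ⟶ M0) ≫ i)
        (s : CategoryTheory.End M0 →+* CategoryTheory.End M),
        r.comp s = RingHom.id _ → IsSemisimpleRing (CategoryTheory.End M0) →
        (∀ X : A, A1.P X → ∀ f : X ⟶ M, f = 0) →
        LeftSaturated i p)) := by
  obtain ⟨hright, hleft⟩ := saturated_of_semisimple_general hadm.shortExact
  exact ⟨fun r hr s hrs hss hM => hright s
      (fun a => (hr (s a)).trans (congrArg (p ≫ ·) (RingHom.congr_fun hrs a))) hss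
      fun Q q hq => hM Q (A0.mem_of_epi q hq hadm.mem0),
    fun r hr s hrs hss hM => hleft s
      (fun a => (hr (s a)).trans (congrArg (· ≫ i) (RingHom.congr_fun hrs a))) hss
      fun Q q hq => hM Q (A1.mem_of_mono q hq hadm.mem1)⟩
end

section
/- Let 0 → M_0 → M → M_1 → 0 be an admissible exact sequence in A with M_0 ∈ A_0 and M_1 ∈ A_1 both principal objects. (1) If the sequence is right saturated and Hom(M, M_0') = 0 for every object M_0' of A_0, then M ⊕ M_0 is principal. (2) If the sequence is left saturated and Hom(M_1', M) = 0 for every object M_1' of A_1, then M ⊕ M_1 is principal. -/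
set_option maxHeartbeats 1000000
set_option synthInstance.maxHeartbeats 400000

open CategoryTheory CategoryTheory.Limits ZeroObject

universe v u

attribute [local instance] CategoryTheory.Abelian.hasFiniteBiproducts

variable {A : Type u} [Category.{v} A] [Abelian A] [CategoryTheory.Linear ℚ A]

/-- An object `M` of an Abelian category is *principal* if for every `m ≥ 0` and every
subobject `N' ⊆ M^m` there are `k, l ≥ 0` and morphisms `α : M^k ⟶ M^m`, `β : M^k ⟶ M^l`
such that `N'` is the image of the restriction of `α` to `ker(β)`. -/
def IsPrincipal (M : A) : Prop :=
  ∀ (m : ℕ) (N' : Subobject (pow M m)),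
    ∃ (k l : ℕ) (α : pow M k ⟶ pow M m) (β : pow M k ⟶ pow M l),
      imageSubobject (kernel.ι β ≫ α) = N'

/-!
Definable subobjects, those of the form `α(ker β)`, are closed under images, sums, and intersections
with preimages. Let `γ : S ⟶ X` and `π : X ⟶ M₁ᵐ` be exact at `X = (M ⊞ M₀)ᵐ` with `S` a power of
`M₀ ⊞ M₀`, and let `N ⊆ X`. Since `M₁` is principal, `π(N) = a(ker b)`; right saturation lifts `a`
to `α` and `b` to `φ`, and `U = α(ker φ)` has the same image under `π` as `N`. Minimality of `ker φ`
leaves it no nonzero morphism to `A₀`, in particular none to quotients of `S`, so `U ⊆ N + ker π`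
improves to `U ⊆ N`. The modular law gives `N = U + (N ∩ ker π)`, and `N ∩ ker π` is the image under
`γ` of a subobject of `S`, which is definable because `M₀` is principal.

The left saturated case is dual: `N = T ∩ q⁻¹(q(N))` with `T` the preimage of `im φ`, where `N ⊆ T`
because maximality of `im φ` leaves `coker φ` no nonzero morphism from `A₁`.
-/

section Subobjects

lemma eq_of_factors_iff {D : Type u} [Category.{v} D] {X : D} {N N' : Subobject X}
    (h : ∀ ⦃T : D⦄ (x : T ⟶ X), N.Factors x ↔ N'.Factors x) : N = N' :=
  le_antisymm (Subobject.le_of_factors ((h _).1 N.factors_self))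
    (Subobject.le_of_factors ((h _).2 N'.factors_self))

variable {C : Type u} [Category.{v} C] [Abelian C] {X Y Z T : C}

lemma factors_iff_comp_cokernel (N : Subobject X) (x : T ⟶ X) :
    N.Factors x ↔ x ≫ cokernel.π N.arrow = 0 := by
  refine ⟨fun h => ?_, fun h => ?_⟩
  · rw [← Subobject.factorThru_arrow N x h, Category.assoc, cokernel.condition, comp_zero]
  · have hx : Abelian.monoLift N.arrow x h ≫ N.arrow = x := Abelian.monoLift_comp _ _ _
    exact hx ▸ Subobject.factors_comp_arrow _

lemma factors_of_epi_comp {N : Subobject X} (e : Z ⟶ T) [Epi e] {x : T ⟶ X}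
    (h : N.Factors (e ≫ x)) : N.Factors x := by
  rw [factors_iff_comp_cokernel, Category.assoc] at h
  exact (factors_iff_comp_cokernel N x).2 (zero_of_epi_comp e h)

lemma imageSubobject_factors_self (f : X ⟶ Y) : (imageSubobject f).Factors f := by
  simpa using imageSubobject_factors_comp_self f (𝟙 X)

lemma imageSubobject_factors_iff (f : X ⟶ Y) (y : T ⟶ Y) :
    (imageSubobject f).Factors y ↔
      ∃ (T' : C) (e : T' ⟶ T) (_ : Epi e) (x : T' ⟶ X), e ≫ y = x ≫ f := by
  refine ⟨fun h => ?_, fun ⟨T', e, _, x, hx⟩ => ?_⟩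
  · obtain ⟨T', e, he, x, hx⟩ := surjective_up_to_refinements_of_epi
      (factorThruImageSubobject f) ((imageSubobject f).factorThru y h)
    refine ⟨T', e, he, x, ?_⟩
    rw [← Subobject.factorThru_arrow _ y h, reassoc_of% hx, imageSubobject_arrow_comp]
  · exact factors_of_epi_comp e (hx ▸ imageSubobject_factors_comp_self _ _)

lemma subImg_factors_iff (f : X ⟶ Y) (N : Subobject X) (y : T ⟶ Y) :
    (subImg f N).Factors y ↔
      ∃ (T' : C) (e : T' ⟶ T) (_ : Epi e) (x : T' ⟶ X), N.Factors x ∧ e ≫ y = x ≫ f := by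
  rw [subImg, imageSubobject_factors_iff]
  constructor
  · rintro ⟨T', e, he, x, hx⟩
    exact ⟨T', e, he, x ≫ N.arrow, Subobject.factors_comp_arrow _, by simpa using hx⟩
  · rintro ⟨T', e, he, x, hN, hx⟩
    exact ⟨T', e, he, N.factorThru x hN, by simpa using hx⟩

lemma gc_subImg_pullback (f : X ⟶ Y) :
    GaloisConnection (subImg f) (Subobject.pullback f).obj := by
  intro N N'
  constructor
  · intro h
    exact Subobject.le_of_factors ((pullback_factors_iff _ _ _).2
      (Subobject.factors_of_le _ h (imageSubobject_factors_self _)))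
  · intro h
    have hfac : N'.Factors (N.arrow ≫ f) :=
      (pullback_factors_iff _ _ _).1 (Subobject.factors_of_le _ h N.factors_self)
    exact imageSubobject_le _ (N'.factorThru _ hfac) (N'.factorThru_arrow _ hfac)

lemma imageSubobject_of_epi (f : X ⟶ Y) [Epi f] : imageSubobject f = ⊤ :=
  top_le_iff.1 (Subobject.le_of_factors
    ((imageSubobject_factors_iff _ _).2 (surjective_up_to_refinements_of_epi f _)))

lemma subImg_top (f : X ⟶ Y) : subImg f ⊤ = imageSubobject f :=
  imageSubobject_iso_comp _ _

lemma subImg_comp (f : X ⟶ Y) (g : Y ⟶ Z) (N : Subobject X) :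
    subImg (f ≫ g) N = subImg g (subImg f N) :=
  (gc_subImg_pullback (f ≫ g)).l_unique
    ((gc_subImg_pullback f).compose (gc_subImg_pullback g)) (Subobject.pullback_comp f g)

lemma subImg_id (N : Subobject X) : subImg (𝟙 X) N = N :=
  (gc_subImg_pullback (𝟙 X)).l_unique GaloisConnection.id Subobject.pullback_id

lemma subImg_pullback (f : X ⟶ Y) (N : Subobject Y) :
    subImg f ((Subobject.pullback f).obj N) = N ⊓ imageSubobject f := by
  apply le_antisymm
  · refine le_inf ((gc_subImg_pullback f).l_u_le N) ?_
    rw [← subImg_top]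
    exact (gc_subImg_pullback f).monotone_l le_top
  · refine Subobject.le_of_factors ((subImg_factors_iff _ _ _).2 ?_)
    obtain ⟨hN, hf⟩ := (Subobject.inf_factors _).1 (Subobject.factors_self (N ⊓ imageSubobject f))
    obtain ⟨T', e, he, x, hx⟩ := (imageSubobject_factors_iff f _).1 hf
    exact ⟨T', e, he, x, (pullback_factors_iff _ _ _).2
      (hx ▸ Subobject.factors_of_factors_right _ hN), hx⟩

lemma pullback_bot (f : X ⟶ Y) : (Subobject.pullback f).obj ⊥ = kernelSubobject f :=
  eq_of_factors_iff fun _ x => by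
    rw [pullback_factors_iff, Subobject.bot_factors_iff_zero, kernelSubobject_factors_iff]

lemma sup_factors_iff (N N' : Subobject X) (x : T ⟶ X) :
    (N ⊔ N').Factors x ↔ ∃ (T' : C) (e : T' ⟶ T) (_ : Epi e) (a b : T' ⟶ X),
      N.Factors a ∧ N'.Factors b ∧ e ≫ x = a + b := by
  refine ⟨fun h => ?_, fun ⟨T', e, _, a, b, ha, hb, hx⟩ => ?_⟩
  · have hle : N ⊔ N' ≤ imageSubobject (biprod.desc N.arrow N'.arrow) :=
      sup_le
        (Subobject.le_of_factors ((imageSubobject_factors_iff _ _).2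
          ⟨_, 𝟙 _, inferInstance, biprod.inl, by simp⟩))
        (Subobject.le_of_factors ((imageSubobject_factors_iff _ _).2
          ⟨_, 𝟙 _, inferInstance, biprod.inr, by simp⟩))
    obtain ⟨T', e, he, y, hy⟩ :=
      (imageSubobject_factors_iff _ _).1 (Subobject.factors_of_le x hle h)
    refine ⟨T', e, he, (y ≫ biprod.fst) ≫ N.arrow, (y ≫ biprod.snd) ≫ N'.arrow,
      Subobject.factors_comp_arrow _, Subobject.factors_comp_arrow _, ?_⟩
    rw [hy, biprod.desc_eq, Preadditive.comp_add, Category.assoc, Category.assoc]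
  · refine factors_of_epi_comp e (hx ▸ Subobject.factors_add _ _ ?_ ?_)
    · exact Subobject.sup_factors_of_factors_left ha
    · exact Subobject.sup_factors_of_factors_right hb

lemma factors_sub {N : Subobject X} {x y : T ⟶ X} (hx : N.Factors x) (hy : N.Factors y) :
    N.Factors (x - y) := by
  rw [factors_iff_comp_cokernel] at hx hy ⊢
  rw [Preadditive.sub_comp, hx, hy, sub_zero]

instance : IsModularLattice (Subobject X) where
  sup_inf_le_assoc_of_le {N} N' L hNL := by
    obtain ⟨h, hL⟩ := (Subobject.inf_factors _).1 (Subobject.factors_self ((N ⊔ N') ⊓ L))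
    obtain ⟨T', e, he, a, b, ha, hb, hab⟩ := (sup_factors_iff N N' _).1 h
    have hbL : L.Factors b := by
      rw [eq_sub_of_add_eq' hab.symm]
      exact factors_sub (Subobject.factors_of_factors_right e hL) (Subobject.factors_of_le a hNL ha)
    exact Subobject.le_of_factors ((sup_factors_iff _ _ _).2
      ⟨T', e, he, a, b, ha, (Subobject.inf_factors b).2 ⟨hb, hbL⟩, hab⟩)

lemma pullback_subImg (f : X ⟶ Y) (N : Subobject X) :
    (Subobject.pullback f).obj (subImg f N) = N ⊔ kernelSubobject f := by
  apply le_antisymm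
  · refine Subobject.le_of_factors ((sup_factors_iff _ _ _).2 ?_)
    have h := (pullback_factors_iff _ _ _).1
      (Subobject.factors_self ((Subobject.pullback f).obj (subImg f N)))
    obtain ⟨T', e, he, a, ha, hea⟩ := (subImg_factors_iff _ _ _).1 h
    refine ⟨T', e, he, a, e ≫ Subobject.arrow _ - a, ha, ?_, (add_sub_cancel a _).symm⟩
    rw [kernelSubobject_factors_iff, Preadditive.sub_comp, Category.assoc, hea, sub_self]
  · refine sup_le ((gc_subImg_pullback f).le_u_l N) ?_
    rw [← pullback_bot]
    exact (gc_subImg_pullback f).monotone_u bot_le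

lemma pullback_subImg_of_mono (f : X ⟶ Y) [Mono f] (N : Subobject X) :
    (Subobject.pullback f).obj (subImg f N) = N := by
  have hker : kernelSubobject f ≤ N := Subobject.le_of_factors <| by
    rw [zero_of_comp_mono f (kernelSubobject_arrow_comp f)]
    exact Subobject.factors_zero
  rw [pullback_subImg, sup_eq_left.2 hker]

lemma sup_inf_kernelSubobject {π : X ⟶ Y} {N U : Subobject X} (hU : U ≤ N)
    (h : subImg π U = subImg π N) : U ⊔ (N ⊓ kernelSubobject π) = N := by
  rw [inf_comm, ← sup_inf_assoc_of_le _ hU, ← pullback_subImg, h, pullback_subImg]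
  simp

lemma inf_pullback_subImg {q : X ⟶ Y} {N T : Subobject X} (hT : N ≤ T)
    (h : T ⊓ kernelSubobject q = N ⊓ kernelSubobject q) :
    T ⊓ (Subobject.pullback q).obj (subImg q N) = N := by
  rw [pullback_subImg, inf_comm, sup_inf_assoc_of_le _ hT, inf_comm, h]
  simp

lemma subImg_kernelSubobject (f : X ⟶ Y) (g : X ⟶ Z) :
    subImg f (kernelSubobject g) = imageSubobject (kernel.ι g ≫ f) := by
  simp only [subImg, ← kernelSubobject_arrow, Category.assoc]
  exact imageSubobject_iso_comp _ _

lemma subImg_kernelSubobject_factors_iff (f : X ⟶ Y) (g : X ⟶ Z) (y : T ⟶ Y) :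
    (subImg f (kernelSubobject g)).Factors y ↔
      ∃ (T' : C) (e : T' ⟶ T) (_ : Epi e) (x : T' ⟶ X), x ≫ g = 0 ∧ e ≫ y = x ≫ f := by
  simp only [subImg_factors_iff, kernelSubobject_factors_iff]

lemma IsUnivExt.pullback_imageSubobject {f : X ⟶ Y} [Mono f] {g : Z ⟶ X} {U : Subobject Y}
    (hU : IsUnivExt (imageSubobject f) (imageSubobject (g ≫ f)) U) :
    (Subobject.pullback f).obj U = imageSubobject g := by
  rw [← pullback_subImg_of_mono f ((Subobject.pullback f).obj U), subImg_pullback, hU.1,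
    ← subImg_top, subImg_comp, pullback_subImg_of_mono, subImg_top]

lemma imageSubobject_biprod_map_id {f : X ⟶ Y} {g : Y ⟶ Z}
    (h : imageSubobject f = kernelSubobject g) (W : C) :
    imageSubobject (biprod.map f (𝟙 W)) = kernelSubobject (biprod.fst ≫ g) := by
  refine eq_of_factors_iff fun T y => ?_
  rw [kernelSubobject_factors_iff, ← Category.assoc, ← kernelSubobject_factors_iff g, ← h,
    imageSubobject_factors_iff, imageSubobject_factors_iff]
  constructor
  · rintro ⟨T', e, he, x, hx⟩
    exact ⟨T', e, he, x ≫ biprod.fst, by simpa using hx =≫ biprod.fst⟩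
  · rintro ⟨T', e, he, x, hx⟩
    refine ⟨T', e, he, biprod.lift x (e ≫ y ≫ biprod.snd), ?_⟩
    apply biprod.hom_ext <;> simp [hx]

lemma imageSubobject_comp_inl {f : X ⟶ Y} {g : Y ⟶ Z}
    (h : imageSubobject f = kernelSubobject g) (W : C) :
    imageSubobject (f ≫ biprod.inl) = kernelSubobject (biprod.map g (𝟙 W)) := by
  refine eq_of_factors_iff fun T y => ?_
  have hy : y ≫ biprod.map g (𝟙 W) = 0 ↔ (y ≫ biprod.fst) ≫ g = 0 ∧ y ≫ biprod.snd = 0 := by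
    refine ⟨fun hy => ⟨?_, ?_⟩, fun ⟨hfst, hsnd⟩ => ?_⟩
    · simpa using hy =≫ biprod.fst
    · simpa using hy =≫ biprod.snd
    · apply biprod.hom_ext <;> simp_all
  rw [kernelSubobject_factors_iff, hy, ← kernelSubobject_factors_iff g, ← h,
    imageSubobject_factors_iff, imageSubobject_factors_iff]
  constructor
  · rintro ⟨T', e, he, x, hx⟩
    refine ⟨⟨T', e, he, x, by simpa using hx =≫ biprod.fst⟩, zero_of_epi_comp e ?_⟩
    simpa using hx =≫ biprod.snd
  · rintro ⟨⟨T', e, he, x, hx⟩, hsnd⟩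
    refine ⟨T', e, he, x, ?_⟩
    apply biprod.hom_ext
    · simpa using hx
    · simp [hsnd]

end Subobjects

section Orthogonality

variable {A0 A1 B : AbelianSubcat A} {X Y Z Q S : A}

lemma factors_of_kernelSubobject_le {q : X ⟶ Q} (hQ : B.P Q) {U : Subobject Y}
    (hU : ObjectProperty.rightOrthogonal B.P (cokernel U.arrow)) {g : X ⟶ Y}
    (h : kernelSubobject q ≤ (Subobject.pullback g).obj U) : U.Factors g := by
  have hker : kernel.ι q ≫ g ≫ cokernel.π U.arrow = 0 := by
    rw [← Category.assoc, ← factors_iff_comp_cokernel, ← pullback_factors_iff]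
    exact Subobject.factors_of_le _ h ((kernelSubobject_factors_iff q _).2 (kernel.condition q))
  have hcoim : B.P (Abelian.coimage q) :=
    B.mem_of_mono (Abelian.factorThruCoimage q) inferInstance hQ
  rw [factors_iff_comp_cokernel, ← cokernel.π_desc (kernel.ι q) _ hker,
    hU (cokernel.desc _ _ hker) hcoim, comp_zero]

lemma factors_of_factors_sup_imageSubobject {γ : S ⟶ X} (hS : B.P S)
    (hY : ObjectProperty.leftOrthogonal B.P Y) {N : Subobject X} {g : Y ⟶ X}
    (h : (N ⊔ imageSubobject γ).Factors g) : N.Factors g := by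
  have him : (imageSubobject (γ ≫ cokernel.π N.arrow)).Factors (g ≫ cokernel.π N.arrow) := by
    obtain ⟨T, e, _, a, b, ha, hb, hab⟩ := (sup_factors_iff _ _ _).1 h
    obtain ⟨T', e', _, x, hx⟩ := (imageSubobject_factors_iff _ _).1 hb
    refine (imageSubobject_factors_iff _ _).2 ⟨T', e' ≫ e, epi_comp _ _, x, ?_⟩
    rw [Category.assoc, reassoc_of% hab, Preadditive.add_comp,
      (factors_iff_comp_cokernel N a).1 ha, zero_add, reassoc_of% hx]
  have hQ : B.P (imageSubobject (γ ≫ cokernel.π N.arrow) : A) :=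
    B.mem_of_epi (factorThruImageSubobject _) inferInstance hS
  rw [factors_iff_comp_cokernel, ← Subobject.factorThru_arrow _ _ him,
    hY (Subobject.factorThru _ _ him) hQ, zero_comp]

lemma IsUnivLift.leftOrthogonal (horth : A1.P ≤ ObjectProperty.rightOrthogonal A0.P)
    {p : X ⟶ Y} {N1 : Subobject Y} {K : Subobject X} (hK : IsUnivLift p N1 K) (hY : A1.P Y) :
    ObjectProperty.leftOrthogonal A0.P (K : A) := by
  intro Z f hZ
  -- `ker f`, as a subobject `K'` of `X`, still has image `N1`, so minimality of `K` gives `K = K'`.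
  let K' : Subobject X := subImg K.arrow (kernelSubobject f)
  have hle : K' ≤ K := imageSubobject_le _ (Subobject.arrow _) rfl
  have hge : subImg p K ≤ subImg p K' := by
    have hfac : (subImg p K').Factors (K.arrow ≫ p) := by
      refine factors_of_kernelSubobject_le (q := f) hZ
        (horth _ (A1.mem_of_epi (cokernel.π _) inferInstance hY)) ?_
      rw [← (gc_subImg_pullback _).le_iff_le, subImg_comp]
    exact imageSubobject_le _ _ (Subobject.factorThru_arrow _ _ hfac)
  have hK' : subImg p K' = N1 := (((gc_subImg_pullback p).monotone_l hle).antisymm hge).trans hK.1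
  have htop : (⊤ : Subobject (K : A)) ≤ kernelSubobject f := by
    rw [← pullback_subImg_of_mono K.arrow (kernelSubobject f), ← (gc_subImg_pullback _).le_iff_le,
      subImg_top]
    exact (imageSubobject_le _ (𝟙 _) (Category.id_comp _)).trans (hK.2 K' hK')
  simpa using (kernelSubobject_factors_iff f (𝟙 _)).1
    (Subobject.factors_of_le _ htop (Subobject.top_factors _))

lemma IsUnivExt.rightOrthogonal (horth : A1.P ≤ ObjectProperty.rightOrthogonal A0.P)
    {S N0 U : Subobject X} (hU : IsUnivExt S N0 U) (hS : A0.P (S : A)) :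
    ObjectProperty.rightOrthogonal A1.P (cokernel U.arrow) := by
  intro Z f hZ
  let c : X ⟶ cokernel U.arrow := cokernel.π U.arrow
  -- The preimage `L` of `im f` meets `S` in `N0` as well, so maximality of `U` gives `L ≤ U`.
  let L : Subobject X := (Subobject.pullback c).obj (imageSubobject f)
  have hUL : U ≤ L := by
    refine Subobject.le_of_factors ((pullback_factors_iff _ _ _).2 ?_)
    rw [cokernel.condition]
    exact Subobject.factors_zero
  have hLS : L ⊓ S ≤ U := by
    have hmem : A0.P (L ⊓ S : Subobject X) :=
      A0.mem_of_mono (Subobject.ofLE _ _ inf_le_right) inferInstance hS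
    refine Subobject.le_of_factors ((factors_iff_comp_cokernel _ _).2 ?_)
    refine (Subobject.bot_factors_iff_zero _).1
      (factors_of_factors_sup_imageSubobject (γ := f) hZ (fun _ g hW => horth _ hW g hmem) ?_)
    rw [bot_sup_eq, ← pullback_factors_iff]
    exact Subobject.factors_of_le _ inf_le_left (Subobject.factors_self (L ⊓ S))
  have hLU : L ≤ U := hU.2 L <| (le_antisymm (le_inf hLS inf_le_right)
    (inf_le_inf_right S hUL)).trans hU.1
  obtain ⟨T, e, _, x, hx⟩ := surjective_up_to_refinements_of_epi c f
  have hxL : L.Factors x := (pullback_factors_iff _ _ _).2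
    (hx ▸ Subobject.factors_of_factors_right e (imageSubobject_factors_self f))
  exact zero_of_epi_comp e
    (hx.trans ((factors_iff_comp_cokernel U x).1 (Subobject.factors_of_le x hLU hxL)))

end Orthogonality

section SummandsOfPowers

variable {C : Type u} [Category.{v} C] [Abelian C] {X Y Z V W : C}

/-- `V` is a direct summand of some power of `X`, that is, `V ∈ add X`. The sources and targets
of the morphisms that define subobjects over `X` are taken from this class. -/
def IsSummandOfPow (X V : C) : Prop :=
  ∃ n : ℕ, Nonempty (Retract V (pow X n))

lemma isSummandOfPow_of_sum_eq_id {ι : Type*} [Fintype ι] (f : ι → (V ⟶ X)) (g : ι → (X ⟶ V))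
    (h : ∑ j, f j ≫ g j = 𝟙 V) : IsSummandOfPow X V := by
  let e := Fintype.equivFin ι
  refine ⟨_, ⟨⟨biproduct.lift fun k => f (e.symm k), biproduct.desc fun k => g (e.symm k), ?_⟩⟩⟩
  rw [biproduct.lift_desc, ← h]
  exact e.symm.sum_comp fun j => f j ≫ g j

lemma IsSummandOfPow.exists_sum_eq_id (h : IsSummandOfPow X V) :
    ∃ (n : ℕ) (f : Fin n → (V ⟶ X)) (g : Fin n → (X ⟶ V)), ∑ j, f j ≫ g j = 𝟙 V := by
  obtain ⟨n, ⟨r⟩⟩ := h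
  refine ⟨n, fun j => r.i ≫ biproduct.π _ j, fun j => biproduct.ι (fun _ => X) j ≫ r.r, ?_⟩
  calc ∑ j, (r.i ≫ biproduct.π _ j) ≫ biproduct.ι (fun _ => X) j ≫ r.r
    _ = r.i ≫ (∑ j, biproduct.π _ j ≫ biproduct.ι (fun _ => X) j) ≫ r.r := by
      simp only [Preadditive.sum_comp, Preadditive.comp_sum, Category.assoc]
    _ = 𝟙 V := by rw [biproduct.total, Category.id_comp, r.retract]

lemma isSummandOfPow_pow (X : C) (n : ℕ) : IsSummandOfPow X (pow X n) :=
  ⟨n, ⟨Retract.refl _⟩⟩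

lemma isSummandOfPow_self (X : C) : IsSummandOfPow X X :=
  isSummandOfPow_of_sum_eq_id (ι := Unit) (fun _ => 𝟙 X) (fun _ => 𝟙 X) (by simp)

lemma isSummandOfPow_biprod_left (X Y : C) : IsSummandOfPow (X ⊞ Y) X :=
  isSummandOfPow_of_sum_eq_id (ι := Unit) (fun _ => biprod.inl) (fun _ => biprod.fst) (by simp)

lemma isSummandOfPow_biprod_right (X Y : C) : IsSummandOfPow (X ⊞ Y) Y :=
  isSummandOfPow_of_sum_eq_id (ι := Unit) (fun _ => biprod.inr) (fun _ => biprod.snd) (by simp)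

lemma IsSummandOfPow.trans (hV : IsSummandOfPow X V) (hW : IsSummandOfPow V W) :
    IsSummandOfPow X W := by
  obtain ⟨m, f, g, hfg⟩ := hV.exists_sum_eq_id
  obtain ⟨n, f', g', hfg'⟩ := hW.exists_sum_eq_id
  refine isSummandOfPow_of_sum_eq_id (fun j : Fin n × Fin m => f' j.1 ≫ f j.2)
    (fun j => g j.2 ≫ g' j.1) ?_
  calc ∑ j : Fin n × Fin m, (f' j.1 ≫ f j.2) ≫ g j.2 ≫ g' j.1
    _ = ∑ j, f' j ≫ (∑ k, f k ≫ g k) ≫ g' j := by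
      simp only [Fintype.sum_prod_type, Preadditive.sum_comp, Preadditive.comp_sum, Category.assoc]
    _ = 𝟙 W := by simp only [hfg, Category.id_comp, hfg']

lemma IsSummandOfPow.biprod (hV : IsSummandOfPow X V) (hW : IsSummandOfPow X W) :
    IsSummandOfPow X (V ⊞ W) := by
  obtain ⟨m, f, g, hfg⟩ := hV.exists_sum_eq_id
  obtain ⟨n, f', g', hfg'⟩ := hW.exists_sum_eq_id
  refine isSummandOfPow_of_sum_eq_id
    (Sum.elim (fun j => biprod.fst ≫ f j) (fun j => biprod.snd ≫ f' j))
    (Sum.elim (fun j => g j ≫ biprod.inl) (fun j => g' j ≫ biprod.inr)) ?_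
  calc ∑ j, Sum.elim (fun j => biprod.fst ≫ f j) (fun j => biprod.snd ≫ f' j) j ≫
        Sum.elim (fun j => g j ≫ biprod.inl) (fun j => g' j ≫ biprod.inr) j
    _ = biprod.fst ≫ (∑ j, f j ≫ g j) ≫ biprod.inl +
        biprod.snd ≫ (∑ j, f' j ≫ g' j) ≫ biprod.inr := by
      simp only [Fintype.sum_sum_type, Sum.elim_inl, Sum.elim_inr, Preadditive.sum_comp,
        Preadditive.comp_sum, Category.assoc]
    _ = 𝟙 (V ⊞ W) := by simp only [hfg, hfg', Category.id_comp, biprod.total]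

lemma powMap_comp (f : X ⟶ Y) (g : Y ⟶ Z) (n : ℕ) :
    powMap (f ≫ g) n = powMap f n ≫ powMap g n := by
  ext
  simp

lemma imageSubobject_powMap_eq_kernelSubobject {f : X ⟶ Y} {g : Y ⟶ Z}
    (h : imageSubobject f = kernelSubobject g) (n : ℕ) :
    imageSubobject (powMap f n) = kernelSubobject (powMap g n) := by
  have hfg : f ≫ g = 0 := (kernelSubobject_factors_iff g f).1 (h ▸ imageSubobject_factors_self f)
  apply le_antisymm
  · refine le_kernelSubobject _ _ (imageSubobject_arrow_comp_eq_zero ?_)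
    ext
    simp [hfg]
  · refine Subobject.le_of_factors ?_
    set y := (kernelSubobject (powMap g n)).arrow
    have hcomp (j : Fin n) : (imageSubobject f).Factors (y ≫ biproduct.π _ j) := by
      rw [h, kernelSubobject_factors_iff]
      simpa only [Category.assoc, biproduct.map_π, zero_comp] using
        kernelSubobject_arrow_comp (powMap g n) =≫ biproduct.π _ j
    let z := biproduct.lift fun j => (imageSubobject f).factorThru _ (hcomp j)
    have hz : z ≫ powMap (imageSubobject f).arrow n = y := by
      refine biproduct.hom_ext _ _ fun j => ?_
      simp [z]
    obtain ⟨T, e, _, x, hx⟩ :=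
      surjective_up_to_refinements_of_epi (powMap (factorThruImageSubobject f) n) z
    refine (imageSubobject_factors_iff _ _).2 ⟨T, e, inferInstance, x, ?_⟩
    rw [← hz, reassoc_of% hx, ← powMap_comp, imageSubobject_arrow_comp]

end SummandsOfPowers

section PPDefinable

variable {C : Type u} [Category.{v} C] [Abelian C] {M V W X Y : C}

/-- `N ⊆ X` is positive-primitively definable over `M`: it is the image `α(ker β)` for some
`α : V ⟶ X` and `β : V ⟶ W` with `V` and `W` summands of powers of `M`. Principality of `M` is
definability of all subobjects of its powers; admitting summands, and an arbitrary `X`, makes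
closure under lattice operations and images independent of exponents. -/
def IsPPDefinable (M : C) (N : Subobject X) : Prop :=
  ∃ (V W : C) (α : V ⟶ X) (β : V ⟶ W), IsSummandOfPow M V ∧ IsSummandOfPow M W ∧
    subImg α (kernelSubobject β) = N

lemma isPPDefinable_top (hX : IsSummandOfPow M X) : IsPPDefinable M (⊤ : Subobject X) :=
  ⟨X, X, 𝟙 X, 0, hX, hX, by rw [kernelSubobject_zero, subImg_id]⟩

lemma IsPPDefinable.trans {N : Subobject X} (hN : IsPPDefinable V N) (hV : IsSummandOfPow M V) :
    IsPPDefinable M N :=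
  let ⟨_, _, α, β, hV', hW', h⟩ := hN
  ⟨_, _, α, β, hV.trans hV', hV.trans hW', h⟩

lemma IsPPDefinable.subImg {N : Subobject X} (hN : IsPPDefinable M N) (f : X ⟶ Y) :
    IsPPDefinable M (subImg f N) :=
  let ⟨_, _, α, β, hV, hW, h⟩ := hN
  ⟨_, _, α ≫ f, β, hV, hW, by rw [subImg_comp, h]⟩

lemma IsPPDefinable.sup {N N' : Subobject X} (hN : IsPPDefinable M N)
    (hN' : IsPPDefinable M N') : IsPPDefinable M (N ⊔ N') := by
  obtain ⟨V, W, α, β, hV, hW, rfl⟩ := hN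
  obtain ⟨V', W', α', β', hV', hW', rfl⟩ := hN'
  refine ⟨V ⊞ V', W ⊞ W', biprod.desc α α', biprod.map β β', hV.biprod hV', hW.biprod hW', ?_⟩
  refine eq_of_factors_iff fun T x => ?_
  rw [sup_factors_iff, subImg_kernelSubobject_factors_iff]
  constructor
  · rintro ⟨T', e, he, y, hy, hx⟩
    refine ⟨T', e, he, (y ≫ biprod.fst) ≫ α, (y ≫ biprod.snd) ≫ α', ?_, ?_, ?_⟩
    · exact (subImg_kernelSubobject_factors_iff _ _ _).2
        ⟨_, 𝟙 _, inferInstance, y ≫ biprod.fst, by simpa using hy =≫ biprod.fst, by simp⟩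
    · exact (subImg_kernelSubobject_factors_iff _ _ _).2
        ⟨_, 𝟙 _, inferInstance, y ≫ biprod.snd, by simpa using hy =≫ biprod.snd, by simp⟩
    · simp [hx, biprod.desc_eq]
  · rintro ⟨T', e, he, a, b, ha, hb, hx⟩
    obtain ⟨T₁, e₁, _, y, hy, ha⟩ := (subImg_kernelSubobject_factors_iff _ _ _).1 ha
    obtain ⟨T₂, e₂, _, y', hy', hb⟩ :=
      (subImg_kernelSubobject_factors_iff _ _ _).1 (Subobject.factors_of_factors_right e₁ hb)
    refine ⟨T₂, e₂ ≫ e₁ ≫ e, inferInstance, biprod.lift (e₂ ≫ y) y', ?_, ?_⟩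
    · apply biprod.hom_ext <;> simp [hy, hy']
    · simp [hx, ha, hb]

lemma IsPPDefinable.inf_pullback {N : Subobject X} {N' : Subobject Y} (hN : IsPPDefinable M N)
    (hN' : IsPPDefinable M N') (hY : IsSummandOfPow M Y) (f : X ⟶ Y) :
    IsPPDefinable M (N ⊓ (Subobject.pullback f).obj N') := by
  obtain ⟨V, W, α, β, hV, hW, rfl⟩ := hN
  obtain ⟨V', W', α', β', hV', hW', rfl⟩ := hN'
  refine ⟨V ⊞ V', (W ⊞ W') ⊞ Y, biprod.fst ≫ α,
    biprod.lift (biprod.map β β') (biprod.fst ≫ α ≫ f - biprod.snd ≫ α'),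
    hV.biprod hV', (hW.biprod hW').biprod hY, ?_⟩
  refine eq_of_factors_iff fun T x => ?_
  rw [Subobject.inf_factors, pullback_factors_iff, subImg_kernelSubobject_factors_iff]
  constructor
  · rintro ⟨T', e, he, y, hy, hx⟩
    have hββ' : y ≫ biprod.map β β' = 0 := by simpa using hy =≫ biprod.fst
    have hαα' : (y ≫ biprod.fst) ≫ α ≫ f = (y ≫ biprod.snd) ≫ α' := by
      simpa [sub_eq_zero] using hy =≫ biprod.snd
    constructor
    · exact (subImg_kernelSubobject_factors_iff _ _ _).2
        ⟨T', e, he, y ≫ biprod.fst, by simpa using hββ' =≫ biprod.fst, by simpa using hx⟩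
    · refine (subImg_kernelSubobject_factors_iff _ _ _).2
        ⟨T', e, he, y ≫ biprod.snd, by simpa using hββ' =≫ biprod.snd, ?_⟩
      rw [← hαα', reassoc_of% hx, Category.assoc]
  · rintro ⟨hx, hxf⟩
    obtain ⟨T₁, e₁, _, y, hy, hx⟩ := (subImg_kernelSubobject_factors_iff _ _ _).1 hx
    obtain ⟨T₂, e₂, _, y', hy', hxf⟩ :=
      (subImg_kernelSubobject_factors_iff _ _ _).1 (Subobject.factors_of_factors_right e₁ hxf)
    refine ⟨T₂, e₂ ≫ e₁, inferInstance, biprod.lift (e₂ ≫ y) y', ?_, by simp [hx]⟩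
    apply biprod.hom_ext
    · apply biprod.hom_ext <;> simp [hy, hy']
    · simp [← hxf, ← reassoc_of% hx]

lemma isPrincipal_iff :
    IsPrincipal M ↔ ∀ (m : ℕ) (N : Subobject (pow M m)), IsPPDefinable M N := by
  refine ⟨fun hM m N => ?_, fun hM m N => ?_⟩
  · obtain ⟨k, l, α, β, h⟩ := hM m N
    exact ⟨_, _, α, β, isSummandOfPow_pow M k, isSummandOfPow_pow M l,
      (subImg_kernelSubobject α β).trans h⟩
  · obtain ⟨V, W, α, β, ⟨k, ⟨r⟩⟩, ⟨l, ⟨s⟩⟩, h⟩ := hM m N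
    refine ⟨k, l, r.r ≫ α, r.r ≫ β ≫ s.i, ?_⟩
    have hker : kernelSubobject (r.r ≫ β ≫ s.i) =
        (Subobject.pullback r.r).obj (kernelSubobject β) := by
      rw [← pullback_bot, Subobject.pullback_comp, pullback_bot, kernelSubobject_comp_mono]
    rw [← subImg_kernelSubobject, hker, subImg_comp, subImg_pullback, imageSubobject_of_epi,
      inf_top_eq, h]

lemma IsPrincipal.isPPDefinable (hM : IsPrincipal M) (hX : IsSummandOfPow M X)
    (N : Subobject X) : IsPPDefinable M N := by
  obtain ⟨n, ⟨r⟩⟩ := hX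
  have hN : subImg r.r (subImg r.i N) = N := by rw [← subImg_comp, r.retract, subImg_id]
  exact hN ▸ (isPrincipal_iff.1 hM n (subImg r.i N)).subImg r.r

lemma subImg_kernelSubobject_eq_pullback_inl (α : V ⟶ X) (β : V ⟶ W) :
    subImg α (kernelSubobject β) =
      (Subobject.pullback biprod.inl).obj (imageSubobject (biprod.lift α β)) := by
  refine eq_of_factors_iff fun T x => ?_
  rw [subImg_kernelSubobject_factors_iff, pullback_factors_iff, imageSubobject_factors_iff]
  refine exists_congr fun T' => exists_congr fun e => exists_congr fun _ => exists_congr fun y => ?_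
  refine ⟨fun ⟨hβ, hα⟩ => ?_, fun h => ⟨?_, ?_⟩⟩
  · apply biprod.hom_ext <;> simp [hα, hβ]
  · simpa using (h =≫ biprod.snd).symm
  · simpa using h =≫ biprod.fst

lemma IsPrincipal.exists_pullback_imageSubobject (hM : IsPrincipal M) {m : ℕ}
    (N : Subobject (pow M m)) :
    ∃ (k l : ℕ) (a : pow M m ⟶ pow M l) (b : pow M k ⟶ pow M l),
      (Subobject.pullback a).obj (imageSubobject b) = N := by
  obtain ⟨k, l, α, β, h⟩ := hM m N
  obtain ⟨n, ⟨r⟩⟩ := (isSummandOfPow_pow M m).biprod (isSummandOfPow_pow M l)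
  refine ⟨k, n, biprod.inl ≫ r.i, biprod.lift α β ≫ r.i, ?_⟩
  rw [Subobject.pullback_comp, ← subImg_top, subImg_comp, pullback_subImg_of_mono, subImg_top,
    ← subImg_kernelSubobject_eq_pullback_inl, subImg_kernelSubobject, h]

end PPDefinable

section Saturated

variable {A0 A1 : AbelianSubcat A} {M0 M M1 M' X Q S : A} {i : M0 ⟶ M} {p : M ⟶ M1}

lemma AbelianSubcat.pow_mem (B : AbelianSubcat A) (hX : B.P X) (n : ℕ) : B.P (pow X n) := by
  induction n with
  | zero =>
    refine B.mem_of_mono (0 : pow X 0 ⟶ 0) ⟨fun f g _ => ?_⟩ B.zero_mem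
    exact biproduct.hom_ext _ _ fun j => j.elim0
  | succ n ih =>
    refine B.mem_of_mono (biprod.lift (biproduct.π _ 0)
      (biproduct.lift fun j : Fin n => biproduct.π (fun _ : Fin (n + 1) => X) j.succ))
      ⟨fun f g h => biproduct.hom_ext _ _ fun j => ?_⟩ (B.mem_biprod hX ih)
    refine Fin.cases ?_ (fun j => ?_) j
    · simpa using h =≫ biprod.fst
    · simpa using (h =≫ biprod.snd) =≫ biproduct.π _ j

lemma RightSaturated.isPPDefinable (horth : A1.P ≤ ObjectProperty.rightOrthogonal A0.P)
    (hsat : RightSaturated i p) (hM1 : IsPrincipal M1) (hmem1 : A1.P M1)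
    (hM : IsSummandOfPow M' M) {m : ℕ} {s : pow M m ⟶ X} {π : X ⟶ pow M1 m}
    (hs : s ≫ π = powMap p m) {γ : S ⟶ X} (hγ : imageSubobject γ = kernelSubobject π)
    (hmemS : A0.P S) (hS : ∀ L : Subobject S, IsPPDefinable M' L) (N : Subobject X) :
    IsPPDefinable M' N := by
  obtain ⟨k, l, a, b, hab⟩ := hM1 m (subImg π N)
  rw [← subImg_kernelSubobject] at hab
  obtain ⟨α, hα, -⟩ := hsat k m a
  obtain ⟨φ, -, hφ⟩ := hsat k l b
  let U : Subobject X := subImg (α ≫ s) (kernelSubobject φ)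
  have hUN : subImg π U = subImg π N := by
    rw [← subImg_comp, Category.assoc, hs, hα, subImg_comp, hφ.1, hab]
  have hU : U ≤ N := by
    have hle : U ≤ N ⊔ imageSubobject γ := by
      rw [hγ, ← pullback_subImg, ← hUN]
      exact (gc_subImg_pullback π).le_u_l U
    have hfac := factors_of_factors_sup_imageSubobject hmemS
      (hφ.leftOrthogonal horth (A1.pow_mem hmem1 k))
      (Subobject.factors_of_le _ hle (imageSubobject_factors_self _))
    exact imageSubobject_le _ _ (N.factorThru_arrow _ hfac)
  rw [← sup_inf_kernelSubobject hU hUN, ← hγ, ← subImg_pullback]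
  have hUdef : IsPPDefinable M U :=
    ⟨_, _, α ≫ s, φ, isSummandOfPow_pow M k, isSummandOfPow_pow M l, rfl⟩
  exact (hUdef.trans hM).sup ((hS _).subImg γ)

lemma LeftSaturated.isPPDefinable (horth : A1.P ≤ ObjectProperty.rightOrthogonal A0.P)
    (hsat : LeftSaturated i p) [Mono i] (hM0 : IsPrincipal M0) (hmem0 : A0.P M0)
    (hM : IsSummandOfPow M' M) {m : ℕ} {ι : pow M0 m ⟶ X} {r : X ⟶ pow M m}
    (hr : ι ≫ r = powMap i m) {q : X ⟶ Q} (hq : imageSubobject ι = kernelSubobject q)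
    (hmemQ : A1.P Q) (hX : IsSummandOfPow M' X) (hQ : IsSummandOfPow M' Q)
    (hQ' : ∀ L : Subobject Q, IsPPDefinable M' L) (N : Subobject X) : IsPPDefinable M' N := by
  obtain ⟨k, l, a, b, hab⟩ := hM0.exists_pullback_imageSubobject ((Subobject.pullback ι).obj N)
  obtain ⟨α, hα, -⟩ := hsat m l a
  obtain ⟨φ, -, hφ⟩ := hsat k l b
  let T : Subobject X := (Subobject.pullback (r ≫ α)).obj (imageSubobject φ)
  have hιT : (Subobject.pullback ι).obj T = (Subobject.pullback ι).obj N := by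
    rw [← Subobject.pullback_comp, reassoc_of% hr, hα, Subobject.pullback_comp,
      hφ.pullback_imageSubobject, hab]
  have hTN : T ⊓ kernelSubobject q = N ⊓ kernelSubobject q := by
    rw [← hq, ← subImg_pullback, ← subImg_pullback, hιT]
  have hT : N ≤ T := by
    have hmem : A0.P (imageSubobject (powMap i l) : A) :=
      A0.mem_of_epi (factorThruImageSubobject _) inferInstance (A0.pow_mem hmem0 l)
    have hker : kernelSubobject (N.arrow ≫ q) ≤ (Subobject.pullback N.arrow).obj T := by
      rw [← pullback_bot, Subobject.pullback_comp, pullback_bot, ← (gc_subImg_pullback _).le_iff_le,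
        subImg_pullback, imageSubobject_mono, Subobject.mk_arrow, inf_comm, ← hTN]
      exact inf_le_left
    refine Subobject.le_of_factors ((pullback_factors_iff _ _ _).2
      (factors_of_kernelSubobject_le (q := N.arrow ≫ q) hmemQ (hφ.rightOrthogonal horth hmem) ?_))
    rwa [← Subobject.pullback_comp] at hker
  have hTdef : IsPPDefinable M' T := by
    have hφdef := (isPPDefinable_top (hM.trans (isSummandOfPow_pow M k))).subImg φ
    simpa only [top_inf_eq, subImg_top] using
      (isPPDefinable_top hX).inf_pullback hφdef (hM.trans (isSummandOfPow_pow M l)) (r ≫ α)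
  rw [← inf_pullback_subImg hT hTN]
  exact hTdef.inf_pullback (hQ' _) hQ q

lemma AdmissibleSeq.imageSubobject_eq_kernelSubobject
    (hadm : AdmissibleSeq A0 A1 M0 M M1 i p) : imageSubobject i = kernelSubobject p :=
  (ShortComplex.exact_iff_image_eq_kernel _).1 hadm.shortExact.exact

lemma AdmissibleSeq.isPrincipal_of_rightSaturated (hadm : AdmissibleSeq A0 A1 M0 M M1 i p)
    (horth : A1.P ≤ ObjectProperty.rightOrthogonal A0.P) (hM0 : IsPrincipal M0)
    (hM1 : IsPrincipal M1) (hsat : RightSaturated i p) : IsPrincipal (M ⊞ M0) := by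
  refine isPrincipal_iff.2 fun m => ?_
  have hexact : imageSubobject (powMap (biprod.map i (𝟙 M0)) m) =
      kernelSubobject (powMap (biprod.fst ≫ p) m) :=
    imageSubobject_powMap_eq_kernelSubobject
      (imageSubobject_biprod_map_id hadm.imageSubobject_eq_kernelSubobject M0) m
  have hS : IsSummandOfPow M0 (pow (M0 ⊞ M0) m) :=
    ((isSummandOfPow_self M0).biprod (isSummandOfPow_self M0)).trans (isSummandOfPow_pow _ m)
  refine hsat.isPPDefinable horth hM1 hadm.mem1 (isSummandOfPow_biprod_left M M0)
    (s := powMap biprod.inl m) ?_ hexact (A0.pow_mem (A0.mem_biprod hadm.mem0 hadm.mem0) m)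
    fun L => (hM0.isPPDefinable hS L).trans (isSummandOfPow_biprod_right M M0)
  rw [← powMap_comp, biprod.inl_fst_assoc]

lemma AdmissibleSeq.isPrincipal_of_leftSaturated (hadm : AdmissibleSeq A0 A1 M0 M M1 i p)
    (horth : A1.P ≤ ObjectProperty.rightOrthogonal A0.P) (hM0 : IsPrincipal M0)
    (hM1 : IsPrincipal M1) (hsat : LeftSaturated i p) : IsPrincipal (M ⊞ M1) := by
  refine isPrincipal_iff.2 fun m => ?_
  have : Mono i := hadm.shortExact.mono_f
  have hexact : imageSubobject (powMap (i ≫ biprod.inl) m) =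
      kernelSubobject (powMap (biprod.map p (𝟙 M1)) m) :=
    imageSubobject_powMap_eq_kernelSubobject
      (imageSubobject_comp_inl hadm.imageSubobject_eq_kernelSubobject M1) m
  have hQ : IsSummandOfPow M1 (pow (M1 ⊞ M1) m) :=
    ((isSummandOfPow_self M1).biprod (isSummandOfPow_self M1)).trans (isSummandOfPow_pow _ m)
  have hM1' : IsSummandOfPow (M ⊞ M1) M1 := isSummandOfPow_biprod_right M M1
  refine hsat.isPPDefinable horth hM0 hadm.mem0 (isSummandOfPow_biprod_left M M1)
    (r := powMap biprod.fst m) ?_ hexact (A1.pow_mem (A1.mem_biprod hadm.mem1 hadm.mem1) m)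
    (isSummandOfPow_pow _ m) (hM1'.trans hQ) fun L => (hM1.isPPDefinable hQ L).trans hM1'
  rw [← powMap_comp, Category.assoc, biprod.inl_fst, Category.comp_id]

end Saturated

theorem principal_of_saturated_general (A0 A1 : AbelianSubcat A)
    (horth : A1.P ≤ ObjectProperty.rightOrthogonal A0.P)
    (M0 M M1 : A) (i : M0 ⟶ M) (p : M ⟶ M1) (hadm : AdmissibleSeq A0 A1 M0 M M1 i p)
    (hM0 : IsPrincipal M0) (hM1 : IsPrincipal M1) :
    (RightSaturated i p → IsPrincipal (M ⊞ M0)) ∧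
    (LeftSaturated i p → IsPrincipal (M ⊞ M1)) :=
  ⟨hadm.isPrincipal_of_rightSaturated horth hM0 hM1,
    hadm.isPrincipal_of_leftSaturated horth hM0 hM1⟩

/-- **Proposition (`PROPSATURATEDPRINCIPAL`).** Let `0 → M_0 → M → M_1 → 0` be an
admissible exact sequence with `M_0 ∈ A_0` and `M_1 ∈ A_1` both principal.
1. If the sequence is right saturated and `Hom(M, A_0) = 0`, then `M ⊕ M_0` is principal.
2. If the sequence is left saturated and `Hom(A_1, M) = 0`, then `M ⊕ M_1` is
principal. -/
theorem principal_of_saturated (A0 A1 : AbelianSubcat A) (horth : OrthogonalPair A0 A1)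
    (M0 M M1 : A) (i : M0 ⟶ M) (p : M ⟶ M1) (hadm : AdmissibleSeq A0 A1 M0 M M1 i p)
    (hM0 : IsPrincipal M0) (hM1 : IsPrincipal M1) :
    (RightSaturated i p → (∀ X : A, A0.P X → ∀ f : M ⟶ X, f = 0) →
      IsPrincipal (M ⊞ M0)) ∧
    (LeftSaturated i p → (∀ X : A, A1.P X → ∀ f : X ⟶ M, f = 0) →
      IsPrincipal (M ⊞ M1)) := by
  obtain ⟨hright, hleft⟩ := principal_of_saturated_general A0 A1
    (fun _ hY _ f hX => horth.1 hX hY f) M0 M M1 i p hadm hM0 hM1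
  exact ⟨fun hsat _ => hright hsat, fun hsat _ => hleft hsat⟩
end
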